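/- For any a, b ∈ ℂ∖{z_1,…,z_n}, the operators D_2(a) and D_2(b) on V commute: D_2(a)∘D_2(b) = D_2(b)∘D_2(a). Moreover, each D_2(a) commutes with the diagonal operators e11 and e22 on V. -/

import Mathlib

open Complex Finset

namespace Paper

noncomputable section

variable {n : ℕ}

/-- The index set of the natural basis of `V = V_{m 0} ⊗ ⋯ ⊗ V_{m (n-1)}`:
the basis vector `v_{i_1} ⊗ ⋯ ⊗ v_{i_n}` corresponds to the index `(i_1,…,i_n)`. -/
abbrev Idx (m : Fin n → ℕ) := ∀ s : Fin n, Fin (m s + 1)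

/-- The tensor product `V = V_{m 0} ⊗ ⋯ ⊗ V_{m (n-1)}` realized concretely as the space of
ℂ-valued functions on the index set of its natural basis. -/
abbrev TV (m : Fin n → ℕ) := Idx m → ℂ

/-- The linear operator `f ↦ (i ↦ c i * f (g i))`; all the basic operators below are of
this form. -/
def mulShift {ι : Type*} (c : ι → ℂ) (g : ι → ι) : Module.End ℂ (ι → ℂ) where
  toFun f i := c i * f (g i)
  map_add' f h := by funext i; simp [mul_add]
  map_smul' a f := by
    funext i
    simp only [Pi.smul_apply, smul_eq_mul, RingHom.id_apply]
    ring

variable (m : Fin n → ℕ)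

/-- `e11` acting in the `s`-th tensor factor: `e11 · v_k = ((m-2k)/2) v_k`. -/
def E11 (s : Fin n) : Module.End ℂ (TV m) :=
  mulShift (fun idx => ((m s : ℂ) - 2 * ((idx s : ℕ) : ℂ)) / 2) id

/-- `e22` acting in the `s`-th tensor factor: `e22 · v_k = -((m-2k)/2) v_k`. -/
def E22 (s : Fin n) : Module.End ℂ (TV m) :=
  mulShift (fun idx => -(((m s : ℂ) - 2 * ((idx s : ℕ) : ℂ)) / 2)) id

/-- `e21` acting in the `s`-th tensor factor: `e21 · v_k = (k+1) v_{k+1}`. -/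
def E21 (s : Fin n) : Module.End ℂ (TV m) :=
  mulShift (fun idx => ((idx s : ℕ) : ℂ)) (fun idx => Function.update idx s (idx s - 1))

/-- `e12` acting in the `s`-th tensor factor: `e12 · v_k = (m-k+1) v_{k-1}`. -/
def E12 (s : Fin n) : Module.End ℂ (TV m) :=
  mulShift (fun idx => (m s : ℂ) - ((idx s : ℕ) : ℂ)) (fun idx => Function.update idx s (idx s + 1))

/-- The diagonal action `e11 = Σ_s e11^{(s)}` on the tensor product. -/
def e11T : Module.End ℂ (TV m) := ∑ s, E11 m s
def e22T : Module.End ℂ (TV m) := ∑ s, E22 m s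
def e21T : Module.End ℂ (TV m) := ∑ s, E21 m s
def e12T : Module.End ℂ (TV m) := ∑ s, E12 m s

/-- `v ∈ V[ν]`, i.e. `(e11 - e22) v = ν v`. -/
def inWt (ν : ℤ) (v : TV m) : Prop := (e11T m - e22T m) v = ((ν : ℤ) : ℂ) • v

/-- The Weyl involution `σ`, acting by `σ v_k = (-1)^k v_{m-k}` in each factor. -/
def sigmaOp : Module.End ℂ (TV m) :=
  mulShift (fun idx => ∏ s, (-1 : ℂ) ^ (m s - (idx s : ℕ))) (fun idx s => (idx s).rev)

/-- The weight of a basis vector: `wt(i) = Σ_s (m_s - 2 i_s)`. -/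
def wt (idx : Idx m) : ℤ := ∑ s, ((m s : ℤ) - 2 * ((idx s : ℕ) : ℤ))

/-- The operator `p(κ) = Σ_{k ≥ 0} e21^k e12^k (1/k!) Π_{j=0}^{k-1} (κ + e22 - e11 - j)^{-1}`.
The operator `e22 - e11` is diagonal in the chosen basis with eigenvalue `-wt(idx)` on the
basis vector labelled by `idx`, so the (partial) inverses `(κ + e22 - e11 - j)^{-1}` are the
diagonal operators with entries `(κ - wt(idx) - j)⁻¹`.  The sum is finite on `V` since
`e12` is nilpotent:  `e12^k = 0` for `k > M = Σ_s m_s`. -/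
def pOp (κ : ℂ) : Module.End ℂ (TV m) :=
  ∑ k ∈ Finset.range ((∑ s, m s) + 1),
    (e21T m) ^ k * (e12T m) ^ k *
      mulShift (fun idx => ((k.factorial : ℂ))⁻¹ *
        ∏ j ∈ Finset.range k, (κ - ((wt m idx : ℤ) : ℂ) - (j : ℂ))⁻¹) id

/-- The operator `𝒜(κ) = σ ∘ p(κ)`. -/
def Aop (κ : ℂ) : Module.End ℂ (TV m) := sigmaOp m * pOp m κ

/-- `Ω₀^{(s,t)} = e11^{(s)} e11^{(t)} + e22^{(s)} e22^{(t)}`. -/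
def Om0 (s t : Fin n) : Module.End ℂ (TV m) := E11 m s * E11 m t + E22 m s * E22 m t

/-- `Ω₁₂^{(s,t)} = e12^{(s)} e21^{(t)}`. -/
def Om12 (s t : Fin n) : Module.End ℂ (TV m) := E12 m s * E21 m t

/-- `Ω₂₁^{(s,t)} = e21^{(s)} e12^{(t)}`. -/
def Om21 (s t : Fin n) : Module.End ℂ (TV m) := E21 m s * E12 m t

/-- The trigonometric r-matrix `r^{(s,t)}(x) = (Ω₊ x + Ω₋)/(x-1)` acting in the `s`-th and
`t`-th tensor factors, where `Ω₊ = ½Ω₀ + Ω₁₂` and `Ω₋ = ½Ω₀ + Ω₂₁`. -/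
def rOp (s t : Fin n) (x : ℂ) : Module.End ℂ (TV m) :=
  (x - 1)⁻¹ • (x • ((2 : ℂ)⁻¹ • Om0 m s t + Om12 m s t) + ((2 : ℂ)⁻¹ • Om0 m s t + Om21 m s t))

/-- The trigonometric Gaudin operators
`K_s(z,μ) = (μ/2)(e11-e22)^{(s)} + Σ_{t ≠ s} r^{(s,t)}(z_s/z_t)`. -/
def Kop (z : Fin n → ℂ) (μ : ℂ) (s : Fin n) : Module.End ℂ (TV m) :=
  (μ / 2) • (E11 m s - E22 m s) + ∑ t ∈ Finset.univ.erase s, rOp m s t (z s / z t)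

/-- The matrix entry `M₁₁(x) = 2πi Σ_s (1-x/z_s)⁻¹ e11^{(s)} - πi e11`. -/
def M11 (z : Fin n → ℂ) (x : ℂ) : Module.End ℂ (TV m) :=
  (2 * (Real.pi : ℂ) * I) • (∑ s, (1 - x / z s)⁻¹ • E11 m s) - ((Real.pi : ℂ) * I) • e11T m

/-- `M₁₂(x) = 2πi Σ_s (1-x/z_s)⁻¹ e21^{(s)} - 2πi e21`. -/
def M12 (z : Fin n → ℂ) (x : ℂ) : Module.End ℂ (TV m) :=
  (2 * (Real.pi : ℂ) * I) • (∑ s, (1 - x / z s)⁻¹ • E21 m s) -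
    (2 * (Real.pi : ℂ) * I) • e21T m

/-- `M₂₁(x) = 2πi Σ_s (1-x/z_s)⁻¹ e12^{(s)}`. -/
def M21 (z : Fin n → ℂ) (x : ℂ) : Module.End ℂ (TV m) :=
  (2 * (Real.pi : ℂ) * I) • (∑ s, (1 - x / z s)⁻¹ • E12 m s)

/-- `M₂₂(x) = 2πi Σ_s (1-x/z_s)⁻¹ e22^{(s)} - πi e22`. -/
def M22 (z : Fin n → ℂ) (x : ℂ) : Module.End ℂ (TV m) :=
  (2 * (Real.pi : ℂ) * I) • (∑ s, (1 - x / z s)⁻¹ • E22 m s) - ((Real.pi : ℂ) * I) • e22T m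

/-- The derivative `(dM₂₂/dx)(x) = 2πi Σ_s z_s⁻¹ (1-x/z_s)⁻² e22^{(s)}`. -/
def M22d (z : Fin n → ℂ) (x : ℂ) : Module.End ℂ (TV m) :=
  (2 * (Real.pi : ℂ) * I) • (∑ s, ((z s)⁻¹ * ((1 - x / z s)⁻¹) ^ 2) • E22 m s)

/-- The coefficient `D₂(x)` of the universal differential operator
`𝒟 = cdet [[∂_u - πiμ + M₁₁, M₁₂],[M₂₁, ∂_u + πiμ + M₂₂]] = ∂_u² + D₁(x) ∂_u + D₂(x)`
(where `x = e^{-2πiu}`, `∂_u = -2πi x ∂_x`), namely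
`D₂(x) = (-πiμ + M₁₁(x)) ∘ (πiμ + M₂₂(x)) - 2πi x (dM₂₂/dx)(x) - M₂₁(x) ∘ M₁₂(x)`. -/
def D2 (z : Fin n → ℂ) (μ : ℂ) (x : ℂ) : Module.End ℂ (TV m) :=
  (-(((Real.pi : ℂ) * I * μ)) • (1 : Module.End ℂ (TV m)) + M11 m z x) *
      ((((Real.pi : ℂ) * I * μ)) • (1 : Module.End ℂ (TV m)) + M22 m z x)
    - (2 * (Real.pi : ℂ) * I * x) • M22d m z x
    - M21 m z x * M12 m z x

/-- The Bethe ansatz equations for the triple `(z; μ; V[ν])`, `ν = M - 2m'`:  `t` is a tuple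
of pairwise distinct complex numbers, each nonzero and distinct from every `z_s`, with
`(1 - μ + ν/2)/t_i + Σ_{j≠i} 2/(t_i - t_j) - Σ_s m_s/(t_i - z_s) = 0` for all `i`. -/
def BAE (z : Fin n → ℂ) (μ : ℂ) {m' : ℕ} (t : Fin m' → ℂ) : Prop :=
  Function.Injective t ∧ (∀ i, t i ≠ 0) ∧ (∀ i s, t i ≠ z s) ∧
    ∀ i, (1 - μ + ((∑ s, (m s : ℂ)) - 2 * (m' : ℂ)) / 2) / t i
        + (∑ j ∈ Finset.univ.erase i, 2 / (t i - t j))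
        - ∑ s, (m s : ℂ) / (t i - z s) = 0

/-- The partial sum `ℓ_1 + ⋯ + ℓ_{s-1}` (0-based). -/
def pref (ℓv : Idx m) (s : Fin n) : ℕ :=
  ∑ u ∈ Finset.univ.filter (fun u => u < s), (ℓv u : ℕ)

/-- Extension of a tuple `t : Fin m' → ℂ` to a function on `ℕ` (by zero). -/
def extt {m' : ℕ} (t : Fin m' → ℂ) : ℕ → ℂ := fun i => if h : i < m' then t ⟨i, h⟩ else 0

/-- The coordinate `ω_ℓ(t,z) = Σ_{ρ ∈ S_{m'}} Π_{s=1}^n Π_{i=ℓ_1+⋯+ℓ_{s-1}+1}^{ℓ_1+⋯+ℓ_s}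
(t_{ρ(i)} - z_s)⁻¹` of the weight function. -/
def omegaCoeff (z : Fin n → ℂ) {m' : ℕ} (t : Fin m' → ℂ) (ℓv : Idx m) : ℂ :=
  ∑ ρ : Equiv.Perm (Fin m'), ∏ s : Fin n,
    ∏ i ∈ Finset.Ico (pref m ℓv s) (pref m ℓv s + (ℓv s : ℕ)), (extt (t ∘ ρ) i - z s)⁻¹

/-- The Bethe vector (weight function) `ω(t,z) = Σ_{ℓ ∈ C} ω_ℓ(t,z) v_ℓ ∈ V[M - 2m']`. -/
def betheVec (z : Fin n → ℂ) {m' : ℕ} (t : Fin m' → ℂ) : TV m :=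
  fun ℓv => if (∑ s, ((ℓv s : ℕ))) = m' then omegaCoeff m z t ℓv else 0

/-- The eigenvalue `k_s(t,z,μ) = (m_s/2)[(μ - ν/2 + m_s/2) + Σ_{p≠s} m_p z_s/(z_s-z_p)
+ 2 Σ_i z_s/(t_i - z_s)]`, with `ν = M - 2m'`. -/
def kEig (z : Fin n → ℂ) (μ : ℂ) {m' : ℕ} (t : Fin m' → ℂ) (s : Fin n) : ℂ :=
  ((m s : ℂ) / 2) * ((μ - ((∑ u, (m u : ℂ)) - 2 * (m' : ℂ)) / 2 + (m s : ℂ) / 2)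
    + (∑ p ∈ Finset.univ.erase s, (m p : ℂ) * z s / (z s - z p))
    + 2 * ∑ i, z s / (t i - z s))

/-- The scalar eigenvalue function `E₂(x, t, z, μ)` of `D₂(x)` on the Bethe vector, i.e.
the coefficient of the fundamental differential operator `ℰ = ∂_u² + E₂(x)`. -/
def E2fun (z : Fin n → ℂ) (μ : ℂ) {m' : ℕ} (t : Fin m' → ℂ) (x : ℂ) : ℂ :=
  (2 * (Real.pi : ℂ) * I) ^ 2 *
    (-(μ + ((∑ u, (m u : ℂ)) - 2 * (m' : ℂ)) / 2) ^ 2 / 4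
      + ∑ s, (((m s : ℂ) * ((m s : ℂ) + 2) / 4 + kEig m z μ t s) / (1 - x / z s)
          - ((m s : ℂ) * ((m s : ℂ) + 2) / 4) / (1 - x / z s) ^ 2))

/-!
The coefficient functions `u = ((1 - x / z_s)⁻¹)_s` range over the algebra `ℂⁿ`, and the
`e_{jk}^{(s)}` make `V` a representation of `𝔰𝔩₂ ⊗ ℂⁿ`. Up to the factor `π²`, `D₂(x)` is
`S u = κ u * κ u + 2 {E u, F (u - 1)}`, where `{·, ·}` is the anticommutator and `κ u` is the
shifted Cartan current. For `u` and `v` at two different points, the partial fraction identity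
`u v = (α + 1) v - α u` expresses `⁅κ u, S v⁆`, `⁅E u, S v⁆` and `⁅F (u - 1), S v⁆` through
anticommutators of currents at the two points. Expanding `⁅S u, S v⁆` by the Leibniz rule, the
nested anticommutators pair up by `{x, {y, z}} - {y, {x, z}} = ⁅⁅x, y⁆, z⁆`, and the remaining
double commutators cancel, once more by the partial fraction identity.
-/

attribute [local instance] LieRing.ofAssociativeRing

section AntiComm

variable {A : Type*} [Ring A]

/-- The anticommutator `x y + y x`, as an `R`-bilinear map. -/
def antiComm (R : Type*) [CommRing R] [Algebra R A] : A →ₗ[R] A →ₗ[R] A :=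
  LinearMap.mul R A + (LinearMap.mul R A).flip

variable {R : Type*} [CommRing R] [Algebra R A]

lemma antiComm_apply (x y : A) : antiComm R x y = x * y + y * x := rfl

lemma antiComm_comm (x y : A) : antiComm R x y = antiComm R y x := add_comm _ _

lemma lie_antiComm (x y z : A) :
    ⁅x, antiComm R y z⁆ = antiComm R ⁅x, y⁆ z + antiComm R y ⁅x, z⁆ := by
  simp only [antiComm_apply, Ring.lie_def]
  noncomm_ring

lemma lie_mul_self (x y : A) : ⁅x, y * y⁆ = antiComm R ⁅x, y⁆ y := by
  simp only [antiComm_apply, Ring.lie_def]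
  noncomm_ring

lemma antiComm_antiComm_sub (x y z : A) :
    antiComm R x (antiComm R y z) - antiComm R y (antiComm R x z) = ⁅⁅x, y⁆, z⁆ := by
  simp only [antiComm_apply, Ring.lie_def]
  noncomm_ring

end AntiComm

section Current

variable {R C A : Type*} [CommRing R] [CommRing C] [Algebra R C] [Ring A] [Algebra R A]

/-- The maps `H`, `E`, `F` form a representation in `A` of the current Lie algebra `𝔰𝔩₂ ⊗ C`.
Here `H` is half of the coroot, like `e11` modulo the centre of `𝔤𝔩₂`, which is why
`⁅E c, F d⁆` is twice `H (c * d)`. -/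
structure IsSl2Current (H E F : C →ₗ[R] A) : Prop where
  lie_H_H (c d : C) : ⁅H c, H d⁆ = 0
  lie_E_E (c d : C) : ⁅E c, E d⁆ = 0
  lie_F_F (c d : C) : ⁅F c, F d⁆ = 0
  lie_H_E (c d : C) : ⁅H c, E d⁆ = E (c * d)
  lie_H_F (c d : C) : ⁅H c, F d⁆ = -F (c * d)
  lie_E_F (c d : C) : ⁅E c, F d⁆ = (2 : R) • H (c * d)

/-- The Cartan current `H (2 u - 1) - μ`, proportional to the entry `-πiμ + M₁₁` of the
trigonometric Lax matrix when `u = (1 - x / z)⁻¹`. -/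
def gaudinCartan (H : C →ₗ[R] A) (μ : R) (u : C) : A := H (2 * u - 1) - algebraMap R A μ

/-- The generating function of the quadratic trigonometric Gaudin Hamiltonians, with the spectral
parameter encoded by the element `u` of `C`. The factor `2` makes up for `gaudinCartan` being twice
the Cartan entry of the normalized Lax matrix and avoids dividing by two in `R`. -/
def gaudinHamiltonian (H E F : C →ₗ[R] A) (μ : R) (u : C) : A :=
  gaudinCartan H μ u * gaudinCartan H μ u + (2 : R) • antiComm R (E u) (F (u - 1))

/-- The partial fraction identity relating `u = (1 - a / z)⁻¹` and `v = (1 - b / z)⁻¹`, for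
`α = a / (b - a)`. It is all that the commutation relations need to know about the points `a`, `b`
and `z`. -/
def PartialFractionRel (α : R) (u v : C) : Prop := u * v = (α + 1) • v - α • u

lemma PartialFractionRel.symm {α : R} {u v : C} (huv : PartialFractionRel α u v) :
    PartialFractionRel (-(α + 1)) v u := by
  rw [PartialFractionRel, mul_comm, huv]
  module

lemma PartialFractionRel.mul_eq {α : R} {u v : C} (huv : PartialFractionRel α u v) :
    u * v = (algebraMap R C α + 1) * v - algebraMap R C α * u := by
  rw [huv, Algebra.smul_def, Algebra.smul_def, map_add, map_one]

lemma lie_gaudinCartan (H : C →ₗ[R] A) (μ : R) (u : C) (x : A) :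
    ⁅x, gaudinCartan H μ u⁆ = ⁅x, H (2 * u - 1)⁆ := by
  have central : ⁅x, algebraMap R A μ⁆ = 0 := (Algebra.commute_algebraMap_right μ x).lie_eq
  rw [gaudinCartan, lie_sub, central, sub_zero]

lemma gaudinCartan_lie (H : C →ₗ[R] A) (μ : R) (u : C) (x : A) :
    ⁅gaudinCartan H μ u, x⁆ = ⁅H (2 * u - 1), x⁆ := by
  rw [← lie_skew, lie_gaudinCartan, lie_skew]

lemma lie_gaudinHamiltonian (H E F : C →ₗ[R] A) (μ : R) (u : C) (x : A) :
    ⁅x, gaudinHamiltonian H E F μ u⁆ = antiComm R ⁅x, gaudinCartan H μ u⁆ (gaudinCartan H μ u) +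
      (2 : R) • (antiComm R ⁅x, E u⁆ (F (u - 1)) + antiComm R (E u) ⁅x, F (u - 1)⁆) := by
  have lie_two_smul (y : A) : ⁅x, (2 : R) • y⁆ = (2 : R) • ⁅x, y⁆ := by
    rw [Ring.lie_def, Ring.lie_def, mul_smul_comm, smul_mul_assoc, smul_sub]
  rw [gaudinHamiltonian, lie_add, lie_two_smul, lie_mul_self (R := R), lie_antiComm]

namespace IsSl2Current

variable {H E F : C →ₗ[R] A} {α μ : R} {u v : C}

lemma lie_gaudinCartan_gaudinCartan (h : IsSl2Current H E F) :
    ⁅gaudinCartan H μ u, gaudinCartan H μ v⁆ = 0 := by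
  rw [gaudinCartan_lie, lie_gaudinCartan, h.lie_H_H]

lemma lie_gaudinCartan_E (h : IsSl2Current H E F) (huv : PartialFractionRel α u v) :
    ⁅gaudinCartan H μ u, E v⁆ = (2 * α + 1) • E v - (2 * α) • E u := by
  have key : (2 * u - 1) * v = (2 * α + 1) • v - (2 * α) • u := by
    simp only [Algebra.smul_def, map_add, map_mul, map_one, map_ofNat]
    linear_combination 2 * huv.mul_eq
  rw [gaudinCartan_lie, h.lie_H_E, key, map_sub, map_smul, map_smul]

lemma lie_gaudinCartan_F (h : IsSl2Current H E F) (huv : PartialFractionRel α u v) :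
    ⁅gaudinCartan H μ u, F (v - 1)⁆ =
      (2 * (α + 1)) • F (u - 1) - (2 * α + 1) • F (v - 1) := by
  have key : (2 * u - 1) * (v - 1) = (2 * α + 1) • (v - 1) - (2 * (α + 1)) • (u - 1) := by
    simp only [Algebra.smul_def, map_add, map_mul, map_one, map_ofNat]
    linear_combination 2 * huv.mul_eq
  rw [gaudinCartan_lie, h.lie_H_F, key, map_sub, map_smul, map_smul, neg_sub]

lemma lie_E_F_eq_smul_gaudinCartan (h : IsSl2Current H E F) (huv : PartialFractionRel α u v) :
    ⁅E u, F (v - 1)⁆ = (α + 1) • (gaudinCartan H μ v - gaudinCartan H μ u) := by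
  have key : u * (v - 1) = (α + 1) • (v - u) := by
    simp only [Algebra.smul_def, map_add, map_one]
    linear_combination huv.mul_eq
  have cartan_sub : gaudinCartan H μ v - gaudinCartan H μ u = (2 : R) • H (v - u) := by
    rw [gaudinCartan, gaudinCartan, sub_sub_sub_cancel_right, ← map_sub, ← map_smul,
      Algebra.smul_def, map_ofNat]
    congr 1
    ring
  rw [h.lie_E_F, key, cartan_sub, map_smul, smul_comm]

lemma lie_gaudinCartan_gaudinHamiltonian (h : IsSl2Current H E F)
    (huv : PartialFractionRel α u v) :
    ⁅gaudinCartan H μ u, gaudinHamiltonian H E F μ v⁆ =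
      (4 * (α + 1)) • antiComm R (F (u - 1)) (E v) - (4 * α) • antiComm R (E u) (F (v - 1)) := by
  rw [lie_gaudinHamiltonian, h.lie_gaudinCartan_gaudinCartan, h.lie_gaudinCartan_E huv,
    h.lie_gaudinCartan_F huv, antiComm_comm (F (u - 1))]
  simp only [map_sub, map_smul, map_zero, LinearMap.sub_apply, LinearMap.smul_apply,
    LinearMap.zero_apply]
  module

lemma lie_E_gaudinHamiltonian (h : IsSl2Current H E F) (huv : PartialFractionRel α u v) :
    ⁅E u, gaudinHamiltonian H E F μ v⁆ =
      (2 * α + 1) • antiComm R (E u) (gaudinCartan H μ v) -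
        (2 * (α + 1)) • antiComm R (gaudinCartan H μ u) (E v) := by
  have lie_cartan : ⁅E u, gaudinCartan H μ v⁆ = (2 * α + 1) • E u - (2 * (α + 1)) • E v := by
    rw [← lie_skew, h.lie_gaudinCartan_E huv.symm]
    module
  rw [lie_gaudinHamiltonian, lie_cartan,
    h.lie_E_E, h.lie_E_F_eq_smul_gaudinCartan (μ := μ) huv, antiComm_comm _ (E v)]
  simp only [map_sub, map_smul, map_zero, LinearMap.sub_apply, LinearMap.smul_apply,
    LinearMap.zero_apply, antiComm_comm (E v)]
  module

lemma lie_F_gaudinHamiltonian (h : IsSl2Current H E F) (huv : PartialFractionRel α u v) :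
    ⁅F (u - 1), gaudinHamiltonian H E F μ v⁆ =
      (2 * α) • antiComm R (gaudinCartan H μ u) (F (v - 1)) -
        (2 * α + 1) • antiComm R (F (u - 1)) (gaudinCartan H μ v) := by
  have lie_cartan :
      ⁅F (u - 1), gaudinCartan H μ v⁆ = (2 * α) • F (v - 1) - (2 * α + 1) • F (u - 1) := by
    rw [← lie_skew, h.lie_gaudinCartan_F huv.symm]
    module
  have lie_E : ⁅F (u - 1), E v⁆ = α • (gaudinCartan H μ u - gaudinCartan H μ v) := by
    rw [← lie_skew, h.lie_E_F_eq_smul_gaudinCartan (μ := μ) huv.symm]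
    module
  rw [antiComm_comm (F (u - 1)), lie_gaudinHamiltonian, lie_cartan, h.lie_F_F, lie_E,
    antiComm_comm _ (gaudinCartan H μ v)]
  simp only [map_sub, map_smul, map_zero, LinearMap.sub_apply, LinearMap.smul_apply]
  module

lemma lie_lie_residue (h : IsSl2Current H E F) (huv : PartialFractionRel α u v) :
    (α + 1) • ⁅⁅gaudinCartan H μ u, F (u - 1)⁆, E v⁆ -
      α • ⁅⁅gaudinCartan H μ u, E u⁆, F (v - 1)⁆ = 0 := by
  have key : (α + 1) • (v * ((2 * u - 1) * (u - 1))) - α • ((2 * u - 1) * u * (v - 1)) = 0 := by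
    simp only [Algebra.smul_def, map_add, map_one]
    linear_combination (2 * u - 1) * huv.mul_eq
  rw [gaudinCartan_lie, gaudinCartan_lie, h.lie_H_F, h.lie_H_E, neg_lie, lie_skew, h.lie_E_F,
    h.lie_E_F, smul_comm _ (2 : R), smul_comm _ (2 : R), ← smul_sub, ← map_smul, ← map_smul,
    ← map_sub, key, map_zero, smul_zero]

theorem commute_gaudinHamiltonian (h : IsSl2Current H E F) (huv : PartialFractionRel α u v) :
    Commute (gaudinHamiltonian H E F μ u) (gaudinHamiltonian H E F μ v) := by
  rw [commute_iff_lie_eq]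
  set K := gaudinCartan H μ
  set S := gaudinHamiltonian H E F μ
  have leibniz : ⁅S u, S v⁆ = antiComm R (K u) ⁅K u, S v⁆ +
      (2 : R) • (antiComm R (F (u - 1)) ⁅E u, S v⁆ + antiComm R (E u) ⁅F (u - 1), S v⁆) := by
    rw [← lie_skew, lie_gaudinHamiltonian, ← lie_skew (S v) (K u), ← lie_skew (S v) (E u),
      ← lie_skew (S v) (F (u - 1)), antiComm_comm _ (K u), antiComm_comm _ (F (u - 1))]
    simp only [map_neg]
    module
  have nested : ⁅S u, S v⁆ =
      (4 : R) • ((α + 1) • ⁅⁅K u, F (u - 1)⁆, E v⁆ - α • ⁅⁅K u, E u⁆, F (v - 1)⁆) +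
        (2 * (2 * α + 1)) • ⁅⁅F (u - 1), E u⁆, K v⁆ := by
    rw [leibniz, h.lie_gaudinCartan_gaudinHamiltonian huv, h.lie_E_gaudinHamiltonian huv,
      h.lie_F_gaudinHamiltonian huv]
    simp only [← antiComm_antiComm_sub (R := R), map_sub, map_smul]
    module
  have cartan_part : ⁅⁅F (u - 1), E u⁆, K v⁆ = 0 := by
    rw [lie_gaudinCartan, ← lie_skew (F (u - 1)), h.lie_E_F, neg_lie, smul_lie, h.lie_H_H,
      smul_zero, neg_zero]
  rw [nested, h.lie_lie_residue huv, cartan_part, smul_zero, smul_zero, add_zero]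

theorem commute_H_one_gaudinHamiltonian (h : IsSl2Current H E F) :
    Commute (H 1) (gaudinHamiltonian H E F μ u) := by
  rw [commute_iff_lie_eq, lie_gaudinHamiltonian, lie_gaudinCartan, h.lie_H_H, h.lie_H_E,
    h.lie_H_F, one_mul, one_mul]
  simp

end IsSl2Current

end Current

section CommutingFactors

variable {ι R A : Type*} [Fintype ι] [CommRing R] [Ring A] [Algebra R A]
  {B : ι → Type*} [∀ s, Ring (B s)] [∀ s, Algebra R (B s)] {ρ : ∀ s, B s →ₐ[R] A}

lemma lie_linearCombination_of_commute (hρ : Pairwise fun s t ↦ ∀ x y, Commute (ρ s x) (ρ t y))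
    (x y : ∀ s, B s) (c d : ι → R) :
    ⁅Fintype.linearCombination R (fun s ↦ ρ s (x s)) c,
        Fintype.linearCombination R (fun s ↦ ρ s (y s)) d⁆ =
      Fintype.linearCombination R (fun s ↦ ρ s ⁅x s, y s⁆) (c * d) := by
  simp only [Fintype.linearCombination_apply, sum_lie]
  refine sum_congr rfl fun s _ ↦ ?_
  rw [lie_sum, sum_eq_single s]
  · simp only [Ring.lie_def, map_sub, map_mul, smul_mul_smul_comm, smul_sub, Pi.mul_apply,
      mul_comm (d s)]
  · intro t _ hts
    rw [smul_lie, lie_smul, (hρ hts.symm _ _).lie_eq, smul_zero, smul_zero]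
  · simp

theorem isSl2Current_linearCombination
    (hρ : Pairwise fun s t ↦ ∀ x y, Commute (ρ s x) (ρ t y)) {h e f : ∀ s, B s}
    (hhe : ∀ s, ⁅h s, e s⁆ = e s) (hhf : ∀ s, ⁅h s, f s⁆ = -f s)
    (hef : ∀ s, ⁅e s, f s⁆ = (2 : R) • h s) :
    IsSl2Current (Fintype.linearCombination R fun s ↦ ρ s (h s))
      (Fintype.linearCombination R fun s ↦ ρ s (e s))
      (Fintype.linearCombination R fun s ↦ ρ s (f s)) := by
  constructor <;> intro c d <;> rw [lie_linearCombination_of_commute hρ]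
  all_goals simp [Fintype.linearCombination_apply, hhe, hhf, hef, smul_sum, smul_comm (2 : R)]

end CommutingFactors

section SiteEnd

variable {ι R : Type*} [DecidableEq ι] [CommRing R] {W : ι → Type*}

/-- The action of an endomorphism on the `s`-th factor of a tensor product of free modules, the
tensor product being realized as the functions on the product of the index sets of the bases. -/
def siteEnd (s : ι) : Module.End R (W s → R) →ₐ[R] Module.End R ((∀ s, W s) → R) where
  toFun T :=
    { toFun f i := T (fun k ↦ f (Function.update i s k)) (i s)
      map_add' f g := funext fun i ↦ congr_fun (T.map_add _ _) (i s)
      map_smul' c f := funext fun i ↦ congr_fun (T.map_smul c _) (i s) }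
  map_one' := by ext; simp
  map_mul' T U := by ext; simp
  map_zero' := rfl
  map_add' T U := rfl
  commutes' c := by ext; simp [Module.algebraMap_end_apply]

lemma siteEnd_apply (s : ι) (T : Module.End R (W s → R)) (f : (∀ s, W s) → R) (i : ∀ s, W s) :
    siteEnd s T f i = T (fun k ↦ f (Function.update i s k)) (i s) := rfl

lemma pairwise_commute_siteEnd [∀ s, Finite (W s)] :
    Pairwise fun s t ↦ ∀ (T : Module.End R (W s → R)) (U : Module.End R (W t → R)),
      Commute (siteEnd (W := W) s T) (siteEnd t U) := by
  classical
  intro s t hst T U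
  have := fun s ↦ Fintype.ofFinite (W s)
  refine LinearMap.ext fun f ↦ funext fun i ↦ ?_
  simp only [Module.End.mul_apply, siteEnd_apply, Function.update_of_ne hst,
    Function.update_of_ne hst.symm]
  rw [LinearMap.pi_apply_eq_sum_univ T, LinearMap.pi_apply_eq_sum_univ U]
  simp only [LinearMap.pi_apply_eq_sum_univ T fun _ ↦ f _,
    LinearMap.pi_apply_eq_sum_univ U fun _ ↦ f _, Finset.sum_apply, Pi.smul_apply, smul_eq_mul,
    sum_mul]
  rw [sum_comm]
  refine sum_congr rfl fun k _ ↦ sum_congr rfl fun l _ ↦ ?_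
  rw [Function.update_comm hst]
  ring

end SiteEnd

section SpinModule

variable (k : ℕ)

/-- The action of `e11` on the coordinates with respect to the basis `v_0, …, v_k` of `V_k`. -/
def spinH : Module.End ℂ (Fin (k + 1) → ℂ) := mulShift (fun i ↦ ((k : ℂ) - 2 * (i : ℕ)) / 2) id

/-- The action of `e12` on the coordinates with respect to the basis `v_0, …, v_k` of `V_k`. The
index `i + 1` wraps around only where the coefficient vanishes. -/
def spinE : Module.End ℂ (Fin (k + 1) → ℂ) := mulShift (fun i ↦ (k : ℂ) - (i : ℕ)) (· + 1)

/-- The action of `e21` on the coordinates with respect to the basis `v_0, …, v_k` of `V_k`. The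
index `i - 1` wraps around only where the coefficient vanishes. -/
def spinF : Module.End ℂ (Fin (k + 1) → ℂ) := mulShift (fun i ↦ ((i : ℕ) : ℂ)) (· - 1)

lemma mulShift_apply {ι : Type*} (c : ι → ℂ) (g : ι → ι) (f : ι → ℂ) (i : ι) :
    mulShift c g f i = c i * f (g i) := rfl

variable {k}

lemma sub_val_mul_val_add_one (i : Fin (k + 1)) :
    ((k : ℂ) - (i : ℕ)) * ((i + 1 : Fin (k + 1)) : ℕ) = (k - (i : ℕ)) * ((i : ℕ) + 1) := by
  by_cases hi : (i : ℕ) = k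
  · simp [hi]
  · rw [Fin.val_add_one_of_lt' (by omega), Nat.cast_add, Nat.cast_one]

lemma val_mul_val_sub_one (i : Fin (k + 1)) :
    ((i : ℕ) : ℂ) * ((i - 1 : Fin (k + 1)) : ℕ) = (i : ℕ) * ((i : ℕ) - 1) := by
  by_cases hi : i = 0
  · simp [hi]
  · rw [Fin.val_sub_one_of_ne_zero hi, Nat.cast_sub, Nat.cast_one]
    exact Nat.one_le_iff_ne_zero.2 (Fin.val_ne_zero_iff.2 hi)

lemma lie_spinH_spinE : ⁅spinH k, spinE k⁆ = spinE k := by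
  refine LinearMap.ext fun f ↦ funext fun i ↦ ?_
  simp only [Ring.lie_def, LinearMap.sub_apply, Module.End.mul_apply, Pi.sub_apply, spinH, spinE,
    mulShift_apply, id]
  linear_combination f (i + 1) * sub_val_mul_val_add_one i

lemma lie_spinH_spinF : ⁅spinH k, spinF k⁆ = -spinF k := by
  refine LinearMap.ext fun f ↦ funext fun i ↦ ?_
  simp only [Ring.lie_def, LinearMap.sub_apply, LinearMap.neg_apply, Module.End.mul_apply,
    Pi.sub_apply, Pi.neg_apply, spinH, spinF, mulShift_apply, id]
  linear_combination f (i - 1) * val_mul_val_sub_one i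

lemma lie_spinE_spinF : ⁅spinE k, spinF k⁆ = (2 : ℂ) • spinH k := by
  refine LinearMap.ext fun f ↦ funext fun i ↦ ?_
  simp only [Ring.lie_def, LinearMap.sub_apply, LinearMap.smul_apply, Module.End.mul_apply,
    Pi.sub_apply, Pi.smul_apply, smul_eq_mul, spinH, spinE, spinF, mulShift_apply, id,
    add_sub_cancel_right, sub_add_cancel]
  linear_combination f i * sub_val_mul_val_add_one i + f i * val_mul_val_sub_one i

end SpinModule

section TensorProduct

lemma E11_eq_siteEnd (s : Fin n) : E11 m s = siteEnd s (spinH (m s)) := by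
  refine LinearMap.ext fun f ↦ funext fun i ↦ ?_
  simp only [E11, spinH, siteEnd_apply, mulShift_apply, id, Function.update_eq_self]

lemma E12_eq_siteEnd (s : Fin n) : E12 m s = siteEnd s (spinE (m s)) := rfl

lemma E21_eq_siteEnd (s : Fin n) : E21 m s = siteEnd s (spinF (m s)) := rfl

lemma E22_eq_neg_E11 (s : Fin n) : E22 m s = -E11 m s := by
  refine LinearMap.ext fun f ↦ funext fun i ↦ ?_
  simp only [E22, E11, mulShift_apply, LinearMap.neg_apply, Pi.neg_apply, neg_mul]

lemma e22T_eq_neg_e11T : e22T m = -e11T m := by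
  simp only [e22T, e11T, E22_eq_neg_E11, sum_neg_distrib]

theorem isSl2Current_tensorProduct :
    IsSl2Current (Fintype.linearCombination ℂ (E11 m)) (Fintype.linearCombination ℂ (E12 m))
      (Fintype.linearCombination ℂ (E21 m)) := by
  rw [funext (E11_eq_siteEnd m), funext (E12_eq_siteEnd m), funext (E21_eq_siteEnd m)]
  exact isSl2Current_linearCombination pairwise_commute_siteEnd (fun _ ↦ lie_spinH_spinE)
    (fun _ ↦ lie_spinH_spinF) (fun _ ↦ lie_spinE_spinF)

lemma linearCombination_E11_one : Fintype.linearCombination ℂ (E11 m) 1 = e11T m := by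
  simp [Fintype.linearCombination_apply, e11T]

end TensorProduct

section LaxMatrix

/-- The values at `x` of the functions `(1 - x / z_s)⁻¹` entering the Lax matrix `M`. -/
def gaudinKernel (z : Fin n → ℂ) (x : ℂ) : Fin n → ℂ := fun s ↦ (1 - x / z s)⁻¹

variable {z : Fin n → ℂ} {a b x : ℂ}

lemma one_sub_div_ne_zero (hz0 : ∀ s, z s ≠ 0) (hx : ∀ s, x ≠ z s) (s : Fin n) :
    1 - x / z s ≠ 0 :=
  sub_ne_zero.2 fun h ↦ hx s ((div_eq_one_iff_eq (hz0 s)).1 h.symm)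

lemma partialFractionRel_gaudinKernel (hz0 : ∀ s, z s ≠ 0) (ha : ∀ s, a ≠ z s)
    (hb : ∀ s, b ≠ z s) (hab : a ≠ b) :
    PartialFractionRel (a / (b - a)) (gaudinKernel z a) (gaudinKernel z b) := by
  funext s
  have hzs := hz0 s
  have hza : z s - a ≠ 0 := sub_ne_zero.2 (ha s).symm
  have hzb : z s - b ≠ 0 := sub_ne_zero.2 (hb s).symm
  have hba : b - a ≠ 0 := sub_ne_zero.2 hab.symm
  simp only [gaudinKernel, Pi.mul_apply, Pi.sub_apply, Pi.smul_apply, smul_eq_mul,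
    one_sub_div hzs, inv_div]
  field_simp
  ring

variable (z x)

lemma M11_eq_linearCombination : M11 m z x =
    ((Real.pi : ℂ) * I) • Fintype.linearCombination ℂ (E11 m) (2 * gaudinKernel z x - 1) := by
  have two_mul_eq : 2 * gaudinKernel z x = (2 : ℂ) • gaudinKernel z x := by
    rw [Algebra.smul_def, map_ofNat]
  rw [two_mul_eq, map_sub, map_smul, linearCombination_E11_one, smul_sub,
    smul_smul, mul_comm _ (2 : ℂ), ← mul_assoc]
  rfl

lemma M12_eq_linearCombination : M12 m z x =
    (2 * (Real.pi : ℂ) * I) • Fintype.linearCombination ℂ (E21 m) (gaudinKernel z x - 1) := by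
  rw [map_sub, smul_sub]
  simp [M12, e21T, gaudinKernel, Fintype.linearCombination_apply]

lemma M21_eq_linearCombination : M21 m z x =
    (2 * (Real.pi : ℂ) * I) • Fintype.linearCombination ℂ (E12 m) (gaudinKernel z x) := rfl

lemma M22_eq_neg_M11 : M22 m z x = -M11 m z x := by
  simp only [M22, M11, E22_eq_neg_E11, e22T_eq_neg_e11T, smul_neg, sum_neg_distrib]
  abel

variable {z x}

lemma smul_M22d_eq_linearCombination (hz0 : ∀ s, z s ≠ 0) (hx : ∀ s, x ≠ z s) :
    x • M22d m z x = -(2 * (Real.pi : ℂ) * I) •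
      Fintype.linearCombination ℂ (E11 m) (gaudinKernel z x * (gaudinKernel z x - 1)) := by
  have scalar (s : Fin n) : x * ((z s)⁻¹ * ((1 - x / z s)⁻¹) ^ 2) =
      (1 - x / z s)⁻¹ * ((1 - x / z s)⁻¹ - 1) := by
    rw [← mul_assoc, ← div_eq_mul_inv]
    linear_combination (-(1 - x / z s)⁻¹) * mul_inv_cancel₀ (one_sub_div_ne_zero hz0 hx s)
  simp only [M22d, E22_eq_neg_E11, smul_neg, sum_neg_distrib, smul_comm x _ (∑ _, _),
    smul_sum (r := x), smul_smul, scalar]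
  exact (neg_smul _ _).symm

theorem D2_eq_smul_gaudinHamiltonian (hz0 : ∀ s, z s ≠ 0) (hx : ∀ s, x ≠ z s) (μ : ℂ) :
    D2 m z μ x = (Real.pi : ℂ) ^ 2 • gaudinHamiltonian (Fintype.linearCombination ℂ (E11 m))
      (Fintype.linearCombination ℂ (E12 m)) (Fintype.linearCombination ℂ (E21 m)) μ
      (gaudinKernel z x) := by
  set u := gaudinKernel z x
  set H := Fintype.linearCombination ℂ (E11 m)
  set E := Fintype.linearCombination ℂ (E12 m)
  set F := Fintype.linearCombination ℂ (E21 m)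
  have entry11 : -((Real.pi : ℂ) * I * μ) • (1 : Module.End ℂ (TV m)) + M11 m z x =
      ((Real.pi : ℂ) * I) • gaudinCartan H μ u := by
    rw [M11_eq_linearCombination, gaudinCartan, Algebra.algebraMap_eq_smul_one]
    module
  have entry22 : ((Real.pi : ℂ) * I * μ) • (1 : Module.End ℂ (TV m)) + M22 m z x =
      -((Real.pi : ℂ) * I) • gaudinCartan H μ u := by
    rw [M22_eq_neg_M11]
    linear_combination (norm := module) (-1 : ℂ) • entry11
  have normal_order : antiComm ℂ (E u) (F (u - 1)) =
      (2 : ℂ) • (E u * F (u - 1)) - (2 : ℂ) • H (u * (u - 1)) := by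
    rw [← (isSl2Current_tensorProduct m).lie_E_F, antiComm_apply, Ring.lie_def]
    module
  rw [D2, entry11, entry22, mul_smul _ x, smul_M22d_eq_linearCombination m hz0 hx,
    M21_eq_linearCombination, M12_eq_linearCombination, gaudinHamiltonian, normal_order]
  simp only [smul_mul_smul_comm, smul_smul]
  match_scalars
  · linear_combination (-(Real.pi : ℂ) ^ 2) * I_sq
  · linear_combination (4 * (Real.pi : ℂ) ^ 2) * I_sq
  · linear_combination (-4 * (Real.pi : ℂ) ^ 2) * I_sq

end LaxMatrix

theorem statement2_general {z : Fin n → ℂ} (hz0 : ∀ s, z s ≠ 0) (μ : ℂ) {a b : ℂ}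
    (ha : ∀ s, a ≠ z s) (hb : ∀ s, b ≠ z s) :
    D2 m z μ a * D2 m z μ b = D2 m z μ b * D2 m z μ a ∧
    D2 m z μ a * e11T m = e11T m * D2 m z μ a ∧
    D2 m z μ a * e22T m = e22T m * D2 m z μ a := by
  have current := isSl2Current_tensorProduct m
  have comm_e11T : Commute (D2 m z μ a) (e11T m) := by
    rw [D2_eq_smul_gaudinHamiltonian m hz0 ha, ← linearCombination_E11_one]
    exact current.commute_H_one_gaudinHamiltonian.symm.smul_left _
  refine ⟨?_, comm_e11T, ?_⟩
  · obtain rfl | hab := eq_or_ne a b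
    · rfl
    rw [D2_eq_smul_gaudinHamiltonian m hz0 ha, D2_eq_smul_gaudinHamiltonian m hz0 hb]
    have rel := partialFractionRel_gaudinKernel hz0 ha hb hab
    exact ((current.commute_gaudinHamiltonian rel).smul_left _).smul_right _
  · rw [e22T_eq_neg_e11T]
    exact comm_e11T.neg_right

/-- Lemma 4.2 of the paper.  For any `a, b ∈ ℂ∖{z_1,…,z_n}` the operators
`D₂(a)` and `D₂(b)` on `V` commute; moreover each `D₂(a)` commutes with the diagonal
operators `e11` and `e22` on `V`. -/
theorem statement2
    (n : ℕ) (hn : 1 < n) (m : Fin n → ℕ) (hm : ∀ s, 0 < m s)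
    (z : Fin n → ℂ) (hz0 : ∀ s, z s ≠ 0) (hz : Function.Injective z)
    (μ : ℂ) (a b : ℂ) (ha : ∀ s, a ≠ z s) (hb : ∀ s, b ≠ z s) :
    D2 m z μ a * D2 m z μ b = D2 m z μ b * D2 m z μ a ∧
    D2 m z μ a * e11T m = e11T m * D2 m z μ a ∧
    D2 m z μ a * e22T m = e22T m * D2 m z μ a :=
  statement2_general m hz0 μ ha hb

end
end Paper
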